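/- arXiv:2204.12132 — 3 statements merged into one kernel-verified Lean document; each statement's English description precedes it below -/
import Mathlib

section
/- Let $R=k[x,y]$ be a polynomial ring over a field $k$, $\mathfrak{m}=(x,y)$, and $M$ the submodule of $R^2$ generated by $(x,0)$, $(y,x)$, $(0,y)$. Then $xM\cap yM$ is generated by $(x^2y,0)$, $(xy^2,0)$, $(0,x^2y)$, $(0,xy^2)$; consequently $\frac{M}{x}\cap\frac{M}{y}=\mathfrak{m}\oplus\mathfrak{m}$ inside $\mathrm{Q}(R)^2$. -/
open Pointwise MvPolynomial

/-!
Everything reduces to the submodule `C = {z ∈ R² : xz ∈ M and yz ∈ M}`. If `xp = yq` with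
`p, q ∈ R²` forces `p = yz` and `q = xz`, then `xM ∩ yM = xyC`, and `M/x ∩ M/y = C` inside `Q(R)²`.
Moreover `xz ∈ M` holds exactly when the second coordinate of `z` lies in `𝔪`, and `yz ∈ M` exactly
when the first one does, so that `C = 𝔪 ⊕ 𝔪`.
-/

section

variable {R F G V : Type*} [CommRing R] [AddCommGroup F] [Module R F] [AddCommGroup G] [Module R G]
  [AddCommGroup V] [Module R V] {x y : R}

variable (F x y) in
/-- Exactness of the Koszul complex `F → F × F → F` of the pair `x, y` in the middle degree: every
syzygy `x • a = y • b` is a Koszul syzygy `x • (y • c) = y • (x • c)`. It serves as the notion of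
coprimality of `x` and `y` with respect to `F`. -/
def KoszulExact : Prop :=
  ∀ ⦃a b : F⦄, x • a = y • b → ∃ c, a = y • c ∧ b = x • c

namespace KoszulExact

theorem of_prime [IsDomain R] (hx : Prime x) (hxy : ¬x ∣ y) : KoszulExact R x y := by
  intro a b hab
  obtain ⟨c, rfl⟩ : x ∣ b := (hx.dvd_or_dvd ⟨a, hab.symm⟩).resolve_left hxy
  exact ⟨c, mul_left_cancel₀ hx.ne_zero (hab.trans (mul_left_comm y x c)), rfl⟩

theorem mvPolynomial_X [IsDomain R] {σ : Type*} {i j : σ} (hij : i ≠ j) :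
    KoszulExact (MvPolynomial σ R) (X i : MvPolynomial σ R) (X j) :=
  of_prime X_prime (X_dvd_X.not.mpr hij)

theorem symm (h : KoszulExact F x y) : KoszulExact F y x := fun _ _ hab ↦
  let ⟨c, hb, ha⟩ := h hab.symm
  ⟨c, ha, hb⟩

theorem prod (hF : KoszulExact F x y) (hG : KoszulExact G x y) : KoszulExact (F × G) x y := by
  rintro ⟨a₁, a₂⟩ ⟨b₁, b₂⟩ hab
  obtain ⟨c₁, rfl, rfl⟩ := hF (congrArg Prod.fst hab)
  obtain ⟨c₂, rfl, rfl⟩ := hG (congrArg Prod.snd hab)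
  exact ⟨(c₁, c₂), rfl, rfl⟩

theorem smul_inf_smul (h : KoszulExact F x y) (M : Submodule R F) :
    x • M ⊓ y • M =
      (x * y) • (M.comap (LinearMap.lsmul R F x) ⊓ M.comap (LinearMap.lsmul R F y)) := by
  ext w
  simp only [Submodule.mem_inf, Submodule.mem_smul_pointwise_iff_exists, Submodule.mem_comap,
    LinearMap.lsmul_apply]
  constructor
  · rintro ⟨⟨p, hp, rfl⟩, q, hq, hqp⟩
    obtain ⟨c, rfl, rfl⟩ := h hqp.symm
    exact ⟨c, ⟨hq, hp⟩, mul_smul x y c⟩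
  · rintro ⟨c, ⟨hxc, hyc⟩, rfl⟩
    exact ⟨⟨y • c, hyc, (mul_smul x y c).symm⟩, x • c, hxc, by rw [mul_comm, mul_smul]⟩

theorem comap_lsmul_map_inf (h : KoszulExact F x y) {φ : F →ₗ[R] V}
    (hφ : Function.Injective φ) (hx : IsSMulRegular V x) (M : Submodule R F) :
    (M.map φ).comap (LinearMap.lsmul R V x) ⊓ (M.map φ).comap (LinearMap.lsmul R V y) =
      (M.comap (LinearMap.lsmul R F x) ⊓ M.comap (LinearMap.lsmul R F y)).map φ := by
  ext w
  simp only [Submodule.mem_inf, Submodule.mem_comap, Submodule.mem_map, LinearMap.lsmul_apply]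
  constructor
  · rintro ⟨⟨p, hp, hpw⟩, q, hq, hqw⟩
    have hqp : x • q = y • p := hφ <| by rw [map_smul, map_smul, hpw, hqw, smul_comm]
    obtain ⟨c, rfl, rfl⟩ := h hqp
    exact ⟨c, ⟨hp, hq⟩, hx ((map_smul φ x c).symm.trans hpw)⟩
  · rintro ⟨c, ⟨hxc, hyc⟩, rfl⟩
    exact ⟨⟨x • c, hxc, map_smul φ x c⟩, y • c, hyc, map_smul φ y c⟩

end KoszulExact

variable (x y) in
/-- The module `M` of the theorem, as the column space of the Toeplitz matrix with rows `(x, y, 0)`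
and `(0, x, y)`. -/
def toeplitzSpan : Submodule R (R × R) :=
  Submodule.span R {(x, 0), (y, x), (0, y)}

theorem mk_mem_toeplitzSpan {u v : R} :
    (u, v) ∈ toeplitzSpan x y ↔ ∃ a b c : R, a * x + b * y = u ∧ b * x + c * y = v := by
  simp [toeplitzSpan, Submodule.mem_span_triple]

theorem mk_mem_toeplitzSpan_comm {u v : R} :
    (u, v) ∈ toeplitzSpan x y ↔ (v, u) ∈ toeplitzSpan y x := by
  simp only [mk_mem_toeplitzSpan]
  constructor <;> rintro ⟨a, b, c, rfl, rfl⟩ <;> exact ⟨c, b, a, add_comm _ _, add_comm _ _⟩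

namespace KoszulExact

theorem comap_lsmul_left_toeplitzSpan (h : KoszulExact R x y) :
    (toeplitzSpan x y).comap (LinearMap.lsmul R (R × R) x) =
      Submodule.prod ⊤ (Ideal.span {x, y}) := by
  ext ⟨u, v⟩
  simp only [Submodule.mem_comap, LinearMap.lsmul_apply, Prod.smul_mk, smul_eq_mul,
    mk_mem_toeplitzSpan, Submodule.mem_prod, Submodule.mem_top, true_and, Ideal.mem_span_pair]
  constructor
  · rintro ⟨a, b, c, hu, hv⟩
    obtain ⟨b', -, rfl⟩ : ∃ b', u - a = y * b' ∧ b = x * b' :=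
      h (by simp only [smul_eq_mul]; linear_combination -hu)
    obtain ⟨c', hv', -⟩ : ∃ c', v - x * b' = y * c' ∧ c = x * c' :=
      h (by simp only [smul_eq_mul]; linear_combination -hv)
    exact ⟨b', c', by linear_combination -hv'⟩
  · rintro ⟨b, c, rfl⟩
    exact ⟨u - b * y, b * x, c * x, by ring, by ring⟩

theorem comap_lsmul_right_toeplitzSpan (h : KoszulExact R x y) :
    (toeplitzSpan x y).comap (LinearMap.lsmul R (R × R) y) =
      Submodule.prod (Ideal.span {x, y}) ⊤ := by
  ext ⟨u, v⟩
  calc (y * u, y * v) ∈ toeplitzSpan x y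
    _ ↔ (y * v, y * u) ∈ toeplitzSpan y x := mk_mem_toeplitzSpan_comm
    _ ↔ (v, u) ∈ Submodule.prod ⊤ (Ideal.span {y, x}) := by
      rw [← h.symm.comap_lsmul_left_toeplitzSpan]; rfl
    _ ↔ (u, v) ∈ Submodule.prod (Ideal.span {x, y}) ⊤ := by
      rw [Submodule.mem_prod, Submodule.mem_prod, and_comm, Set.pair_comm]

theorem comap_lsmul_inf_toeplitzSpan (h : KoszulExact R x y) :
    (toeplitzSpan x y).comap (LinearMap.lsmul R (R × R) x) ⊓
        (toeplitzSpan x y).comap (LinearMap.lsmul R (R × R) y) =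
      Submodule.prod (Ideal.span {x, y}) (Ideal.span {x, y}) := by
  rw [h.comap_lsmul_left_toeplitzSpan, h.comap_lsmul_right_toeplitzSpan, Submodule.prod_inf_prod,
    top_inf_eq, inf_top_eq]

end KoszulExact

theorem mul_smul_span_pair_prod_span_pair (x y : R) :
    (x * y) • Submodule.prod (Ideal.span {x, y}) (Ideal.span {x, y}) =
      Submodule.span R {(x ^ 2 * y, 0), (x * y ^ 2, 0), (0, x ^ 2 * y), (0, x * y ^ 2)} := by
  have hx : x * y * x = x ^ 2 * y := by ring
  have hy : x * y * y = x * y ^ 2 := by ring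
  rw [Ideal.span, ← LinearMap.span_inl_union_inr, Submodule.smul_span]
  simp only [Set.image_pair, LinearMap.coe_inl, LinearMap.coe_inr, Set.insert_union,
    Set.singleton_union, Set.smul_set_insert, Set.smul_set_singleton, Prod.smul_mk, smul_eq_mul,
    mul_zero, hx, hy]

theorem stmt3_general (h : KoszulExact R x y) {M : Submodule R (R × R)}
    (hM : M = Submodule.span R {(x, 0), (y, x), (0, y)}) {ι : R →ₗ[R] V}
    (hι : Function.Injective ι) (hx : IsSMulRegular V x) :
    x • M ⊓ y • M =
        Submodule.span R {(x ^ 2 * y, 0), (x * y ^ 2, 0), (0, x ^ 2 * y), (0, x * y ^ 2)} ∧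
      (M.map (ι.prodMap ι)).comap (LinearMap.lsmul R (V × V) x) ⊓
          (M.map (ι.prodMap ι)).comap (LinearMap.lsmul R (V × V) y) =
        (Submodule.map ι (Ideal.span {x, y})).prod (Submodule.map ι (Ideal.span {x, y})) := by
  obtain rfl : M = toeplitzSpan x y := hM
  have hRR : KoszulExact (R × R) x y := h.prod h
  have hιι : Function.Injective (ι.prodMap ι) := hι.prodMap hι
  have hxx : IsSMulRegular (V × V) x := Prod.isSMulRegular_iff.mpr ⟨hx, hx⟩
  constructor
  · rw [hRR.smul_inf_smul, h.comap_lsmul_inf_toeplitzSpan, mul_smul_span_pair_prod_span_pair]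
  · rw [hRR.comap_lsmul_map_inf hιι hxx, h.comap_lsmul_inf_toeplitzSpan,
      LinearMap.prodMap_map_prod]

end

/-- for `R = k[x,y]` and `M = ⟨(x,0),(y,x),(0,y)⟩ ⊆ R²`,
`xM ∩ yM = ⟨(x²y,0),(xy²,0),(0,x²y),(0,xy²)⟩` and consequently
`M/x ∩ M/y = 𝔪 ⊕ 𝔪` inside `Q(R)²`, where `M/a` is realized as the preimage of
the image `M'` of `M` in `Q(R)²` under multiplication by `a`. -/
theorem stmt3 (k : Type*) [Field k]
    (x y : MvPolynomial (Fin 2) k) (hx : x = X 0) (hy : y = X 1)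
    (M : Submodule (MvPolynomial (Fin 2) k)
      (MvPolynomial (Fin 2) k × MvPolynomial (Fin 2) k))
    (hM : M = Submodule.span _ {(x, 0), (y, x), (0, y)})
    (φ : MvPolynomial (Fin 2) k × MvPolynomial (Fin 2) k →ₗ[MvPolynomial (Fin 2) k]
      FractionRing (MvPolynomial (Fin 2) k) × FractionRing (MvPolynomial (Fin 2) k))
    (hφ : φ = (Algebra.linearMap (MvPolynomial (Fin 2) k) (FractionRing (MvPolynomial (Fin 2) k))).prodMap
      (Algebra.linearMap (MvPolynomial (Fin 2) k) (FractionRing (MvPolynomial (Fin 2) k))))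
    (m' : Submodule (MvPolynomial (Fin 2) k) (FractionRing (MvPolynomial (Fin 2) k)))
    (hm' : m' = Submodule.map
      (Algebra.linearMap (MvPolynomial (Fin 2) k) (FractionRing (MvPolynomial (Fin 2) k)))
      (Ideal.span {x, y})) :
    x • M ⊓ y • M =
        Submodule.span _ {(x ^ 2 * y, 0), (x * y ^ 2, 0), (0, x ^ 2 * y), (0, x * y ^ 2)} ∧
      (M.map φ).comap (LinearMap.lsmul _ _ x) ⊓ (M.map φ).comap (LinearMap.lsmul _ _ y) =
        m'.prod m' := by
  subst hx hy hφ hm'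
  exact stmt3_general (.mvPolynomial_X zero_ne_one) hM
    (IsFractionRing.injective _ (FractionRing (MvPolynomial (Fin 2) k))) (.of_ne_zero (X_ne_zero 0))
end

section
/- Let $R$ be a Noetherian ring satisfying Serre's condition $(S_1)$, $n>0$ an integer, and $N$ a nonzero finitely generated $R$-module. Then $N$ satisfies $(S_n)$ if and only if every sequence $a_1,\dots,a_n$ of non-zerodivisors of $R$ with $\mathrm{ht}_R(a_1,\dots,a_i)\ge i$ for all $1\le i\le n$ is $N$-regular. -/
open Pointwise RingTheory.Sequence

/-- The height of an ideal. -/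
noncomputable def idealHt {R : Type*} [CommRing R] (I : Ideal R) : ℕ∞ :=
  ⨅ p ∈ {p : PrimeSpectrum R | I ≤ p.asIdeal}, Order.height p

/-- Serre's condition `(Sₙ)` for a finitely generated module `N` over a
Noetherian ring `R`: for every prime `p` in the support of `N` (i.e. containing
the annihilator), `depth_{R_p} N_p ≥ min (n, dim R_p)`, expressed by the
existence of a weakly regular sequence on `N_p` of length `min (n, ht p)`
consisting of elements of `p` (which is regular since `N_p` is finitely
generated and nonzero). -/
noncomputable def serreCond (R : Type*) [CommRing R] (N : Type*) [AddCommGroup N]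
    [Module R N] (n : ℕ) : Prop :=
  ∀ (p : Ideal R) (hp : p.IsPrime), Module.annihilator R N ≤ p →
    ∃ l : List R, (∀ x ∈ l, x ∈ p) ∧
      (l.length : ℕ∞) = min (n : ℕ∞) (Order.height (⟨p, hp⟩ : PrimeSpectrum R)) ∧
      IsWeaklyRegular (LocalizedModule p.primeCompl N)
        (l.map (algebraMap R (Localization p.primeCompl)))

/-!
If `N` satisfies `(Sₙ)`, then `depth Nₚ ≥ i` whenever `p ∈ Supp N` contains `(a₁, …, aᵢ)`, as
`ht p ≥ i` for such `p`. By Rees's theorem this depth condition is the vanishing of the modules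
`Extʲ(κ(p), Nₚ)` for `j < i`, and the long exact sequence shows that the bound drops by at most one
modulo a regular element. If `aᵢ` were a zero divisor on `N ⧸ (a₁, …, aᵢ₋₁)N`, it would lie in an
associated prime `p` of that module; there the depth is `0`, although the bound is still at least
`1`.

Conversely, `(S₁)` says that all associated primes of `R` have height `0`, so prime avoidance
produces, inside any prime `p`, non-zerodivisors `a₁, …, aₘ` with `m = min (n, ht p)` and
`ht (a₁, …, aᵢ) ≥ i`. Continued by `aₘ₊₁ = ⋯ = aₙ = 1`, this is a sequence of the required kind,
and localizing its initial segment at `p` gives the depth bound for `Nₚ`.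
-/

section Height

variable {R : Type*} [CommRing R]

lemma idealHt_eq_height (I : Ideal R) : idealHt I = I.height := by
  refine le_antisymm ?_ (le_iInf₂ fun p hp ↦ ?_)
  · rw [Ideal.height_eq_inf_minimalPrimes]
    refine le_iInf₂ fun p hp ↦ ?_
    let P : PrimeSpectrum R := ⟨p, hp.isPrime⟩
    exact (iInf₂_le P hp.le).trans_eq P.height_eq_orderHeight.symm
  · exact (Ideal.height_mono hp).trans_eq p.height_eq_orderHeight

lemma add_one_le_height_of_forall_not_le {J L : Ideal R} {r : ℕ} (hJ : r ≤ J.height) (hJL : J ≤ L)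
    (h : ∀ K ∈ J.minimalPrimes, K.height = r → ¬ L ≤ K) : r + 1 ≤ L.height := by
  rw [Ideal.height_eq_inf_minimalPrimes L]
  refine le_iInf₂ fun p hp ↦ ?_
  have := hp.isPrime
  have hJp : J ≤ p := hJL.trans hp.le
  have hrp : r ≤ p.height := hJ.trans (Ideal.height_mono hJp)
  refine Order.add_one_le_of_lt (hrp.lt_of_ne fun hpr ↦ ?_)
  have : p.FiniteHeight := ⟨.inr (hpr ▸ ENat.natCast_ne_top r)⟩
  exact h p (Ideal.mem_minimalPrimes_of_height_le hJp (hpr ▸ hJ)) hpr.symm hp.le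

lemma exists_mem_notMem_add_one_le_height_sup_span [IsNoetherianRing R] {I J : Ideal R} {r : ℕ}
    (hI : r + 1 ≤ I.height) (hJ : r ≤ J.height) {T : Set (Ideal R)} (hT : T.Finite)
    (hprime : ∀ q ∈ T, q.IsPrime) (hIT : ∀ q ∈ T, ¬ I ≤ q) :
    ∃ x ∈ I, (∀ q ∈ T, x ∉ q) ∧ r + 1 ≤ (J ⊔ Ideal.span {x}).height := by
  let S : Set (Ideal R) := {K | K ∈ J.minimalPrimes ∧ K.height = r}
  have hS : S.Finite := J.finite_minimalPrimes_of_isNoetherianRing.subset fun _ h ↦ h.1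
  have hIS : ∀ K ∈ S, ¬ I ≤ K := fun K hK hle ↦
    ((ENat.add_one_le_natCast_iff.mp (hI.trans ((Ideal.height_mono hle).trans_eq hK.2)))).false
  have havoid : ¬ (I : Set R) ⊆ ⋃ q ∈ T ∪ S, (q : Set R) := by
    intro hsub
    obtain ⟨q, hq, hle⟩ := (Ideal.subset_union_prime_finite (f := id) (hT.union hS) ⊥ ⊥
      fun q hq _ _ ↦ hq.elim (hprime q) fun h ↦ h.1.isPrime).mp hsub
    exact hq.elim (hIT q · hle) (hIS q · hle)
  obtain ⟨x, hxI, hx⟩ := Set.not_subset.mp havoid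
  simp only [Set.mem_iUnion, exists_prop, not_exists, not_and] at hx
  refine ⟨x, hxI, fun q hq ↦ hx q (.inl hq), ?_⟩
  refine add_one_le_height_of_forall_not_le hJ le_sup_left fun K hK hKr hle ↦ ?_
  exact hx K (.inr ⟨hK, hKr⟩) (hle (Ideal.mem_sup_right (Ideal.mem_span_singleton_self x)))

end Height

section HeightSequence

variable {R : Type*} [CommRing R]

/-- `l = [a₁, …, aₙ]` satisfies `ht (a₁, …, aᵢ) ≥ i` for all `i ≤ n`. The unit ideal has height `⊤`,
so every sequence may be continued after a unit. -/
def IsHeightSequence (l : List R) : Prop :=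
  ∀ i ≤ l.length, i ≤ (Ideal.ofList (l.take i)).height

lemma IsHeightSequence.nil : IsHeightSequence ([] : List R) := by
  simp [IsHeightSequence]

lemma IsHeightSequence.concat {l : List R} (hl : IsHeightSequence l) {a : R}
    (ha : l.length + 1 ≤ (Ideal.ofList l ⊔ Ideal.span {a}).height) :
    IsHeightSequence (l ++ [a]) := by
  intro i hi
  rw [List.length_append, List.length_singleton] at hi
  obtain hi | rfl := Nat.le_succ_iff.mp hi
  · rw [List.take_append_of_le_length hi]
    exact hl i hi
  · rw [List.take_of_length_le (by simp), Ideal.ofList_append, Ideal.ofList_singleton]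
    exact_mod_cast ha

lemma IsHeightSequence.append_replicate_one {l : List R} (hl : IsHeightSequence l) (k : ℕ) :
    IsHeightSequence (l ++ List.replicate k 1) := by
  induction k with
  | zero => simpa using hl
  | succ k ih =>
    rw [List.replicate_succ', ← List.append_assoc]
    exact ih.concat (by simp)

lemma exists_isHeightSequence_of_le_height [IsNoetherianRing R]
    (hR : ∀ q ∈ associatedPrimes R R, q.height = 0) {I : Ideal R} (m : ℕ) (hm : m ≤ I.height) :
    ∃ l : List R, l.length = m ∧ (∀ x ∈ l, x ∈ I) ∧ (∀ x ∈ l, x ∈ nonZeroDivisors R) ∧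
      IsHeightSequence l := by
  induction m with
  | zero => exact ⟨[], rfl, by simp, by simp, .nil⟩
  | succ m ih =>
    obtain ⟨l, rfl, hlI, hlR, hl⟩ := ih ((Nat.cast_le.mpr m.le_succ).trans hm)
    have hlht : l.length ≤ (Ideal.ofList l).height := by simpa using hl l.length le_rfl
    have hI : ∀ q ∈ associatedPrimes R R, ¬ I ≤ q := fun q hq hle ↦ by
      simpa [hR q hq] using hm.trans (Ideal.height_mono hle)
    obtain ⟨a, haI, ha, hht⟩ := exists_mem_notMem_add_one_le_height_sup_span
      (by exact_mod_cast hm) hlht (associatedPrimes.finite R R) (fun q hq ↦ hq.isPrime) hI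
    have haR : a ∈ nonZeroDivisors R := by
      by_contra h
      obtain ⟨q, hq, haq⟩ := Set.mem_iUnion₂.mp
        ((biUnion_associatedPrimes_eq_compl_nonZeroDivisors R).ge h)
      exact ha q hq haq
    refine ⟨l ++ [a], by simp, ?_, ?_, hl.concat hht⟩
    · simpa [or_imp, forall_and] using ⟨hlI, haI⟩
    · simpa [or_imp, forall_and] using ⟨hlR, haR⟩

end HeightSequence

section Grade

open CategoryTheory Abelian

universe u v

variable {R : Type u} [CommRing R] [Small.{v} R] {I : Ideal R} {M M' : Type v}
  [AddCommGroup M] [Module R M] [AddCommGroup M'] [Module R M'] {k : ℕ}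

/-- The `I`-grade of `M` is at least `k`, in the homological form `Extⁱ(R ⧸ I, M) = 0` for
`i < k`; by Rees's theorem this agrees with the existence of an `M`-regular sequence of length `k`
in `I` when `M` is finitely generated over a Noetherian ring and `IM ≠ M`. -/
def GradeGE (I : Ideal R) (M : Type v) [AddCommGroup M] [Module R M] (k : ℕ) : Prop :=
  ∀ i < k, Subsingleton (Ext (ModuleCat.of R (Shrink.{v} (R ⧸ I))) (ModuleCat.of R M) i)

namespace GradeGE

lemma mono {m : ℕ} (h : GradeGE I M m) (hkm : k ≤ m) : GradeGE I M k :=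
  fun i hi ↦ h i (hi.trans_le hkm)

lemma congr (h : GradeGE I M k) (e : M ≃ₗ[R] M') : GradeGE I M' k := fun i hi ↦
  AddCommGrpCat.subsingleton_of_isZero <| (AddCommGrpCat.isZero_of_iff_subsingleton.mpr
    (h i hi)).of_iso ((extFunctorObj (ModuleCat.of R (Shrink.{v} (R ⧸ I))) i).mapIso
      e.toModuleIso.symm)

lemma quotSMulTop {x : R} (h : GradeGE I M (k + 1)) (hx : IsSMulRegular M x) :
    GradeGE I (QuotSMulTop x M) k := by
  intro i hi
  have hzero {j : ℕ} (hj : j < k + 1) := AddCommGrpCat.isZero_of_iff_subsingleton.mpr (h j hj)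
  exact AddCommGrpCat.subsingleton_of_isZero <| ShortComplex.Exact.isZero_of_both_zeros
    (Ext.covariant_sequence_exact₃' _
      (IsSMulRegular.smulShortComplex_shortExact (M := .of R M) hx) i (i + 1) rfl)
    ((hzero (by omega)).eq_zero_of_src _) ((hzero (by omega)).eq_zero_of_tgt _)

lemma notMem_associatedPrimes [IsNoetherianRing R] (h : GradeGE I M 1) :
    I ∉ associatedPrimes R M := by
  intro hI
  obtain ⟨hprime, f, hf⟩ := (isAssociatedPrime_iff_exists_injective_linearMap I M).mp hI
  have := h 0 one_pos
  have : Subsingleton (Shrink.{v} (R ⧸ I) →ₗ[R] M) :=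
    (Ext.addEquiv₀.trans (ModuleCat.homAddEquiv
      (M := .of R (Shrink.{v} (R ⧸ I))) (N := .of R M))).symm.subsingleton
  have hf0 : f = 0 :=
    ((Shrink.linearEquiv R (R ⧸ I)).congrLeft M R).symm.subsingleton.elim f 0
  exact hprime.ne_top (Ideal.Quotient.subsingleton_iff.mp
    ⟨fun a b ↦ hf (by simp [hf0])⟩)

lemma of_isWeaklyRegular [IsLocalRing R] [IsNoetherianRing R] [Module.Finite R M] [Nontrivial M]
    {l : List R} (hl : IsWeaklyRegular M l) (hmem : ∀ x ∈ l, x ∈ IsLocalRing.maximalIdeal R) :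
    GradeGE (IsLocalRing.maximalIdeal R) M l.length := by
  have hlt : IsLocalRing.maximalIdeal R • (⊤ : Submodule R M) < ⊤ :=
    (Submodule.top_ne_ideal_smul_of_le_jacobson_annihilator
      (IsLocalRing.maximalIdeal_le_jacobson _)).symm.lt_top
  have rees := ModuleCat.exists_isRegular_tfae _ l.length (.of R M) hlt
  exact (rees.out 1 3 :).mpr ⟨l, rfl, hmem, .of_isWeaklyRegular_of_mem_maximalIdeal M hmem hl⟩

end GradeGE

end Grade

section LocalDepth

variable {R : Type*} [CommRing R] {M : Type*} [AddCommGroup M] [Module R M]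
  {p : PrimeSpectrum R} {k : ℕ}

/-- The depth of the `Rₚ`-module `Mₚ` is at least `k`. -/
def LocalDepthGE (p : PrimeSpectrum R) (M : Type*) [AddCommGroup M] [Module R M] (k : ℕ) : Prop :=
  GradeGE (IsLocalRing.maximalIdeal (Localization.AtPrime p.asIdeal))
    (LocalizedModule.AtPrime p.asIdeal M) k

/-- The isomorphism `S⁻¹M ⧸ aS⁻¹M ≃ S⁻¹(M ⧸ aM)`. -/
noncomputable def localizedQuotSMulTopEquiv (S : Submonoid R) (a : R) (M : Type*) [AddCommGroup M]
    [Module R M] :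
    QuotSMulTop (algebraMap R (Localization S) a) (LocalizedModule S M) ≃ₗ[Localization S]
      LocalizedModule S (QuotSMulTop a M) :=
  (QuotSMulTop.congr _ (IsLocalizedModule.isBaseChange S (Localization S)
      (LocalizedModule.mkLinearMap S M)).equiv.symm).trans <|
    (QuotSMulTop.algebraMapTensorEquivTensorQuotSMulTop a M (Localization S)).trans
      (IsLocalizedModule.isBaseChange S (Localization S)
        (LocalizedModule.mkLinearMap S (QuotSMulTop a M))).equiv

lemma LocalDepthGE.quotSMulTop {a : R} (h : LocalDepthGE p M (k + 1)) (ha : IsSMulRegular M a) :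
    LocalDepthGE p (QuotSMulTop a M) k := by
  have ha' : IsSMulRegular (LocalizedModule.AtPrime p.asIdeal M)
      (algebraMap R (Localization.AtPrime p.asIdeal) a) := by
    simpa [isWeaklyRegular_singleton_iff] using
      ((isWeaklyRegular_singleton_iff M a).mpr ha).of_isLocalizedModule
        (Localization.AtPrime p.asIdeal) p.asIdeal.primeCompl
        (LocalizedModule.mkLinearMap p.asIdeal.primeCompl M)
  exact (GradeGE.quotSMulTop h ha').congr (localizedQuotSMulTopEquiv p.asIdeal.primeCompl a M)

lemma LocalDepthGE.notMem_associatedPrimes [IsNoetherianRing R] (h : LocalDepthGE p M 1) :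
    p.asIdeal ∉ associatedPrimes R M := fun hp ↦
  GradeGE.notMem_associatedPrimes h
    (Module.associatedPrimes.mem_associatedPrimes_atPrime_of_mem_associatedPrimes hp)

lemma mem_support_of_mem_associatedPrimes (hp : p.asIdeal ∈ associatedPrimes R M) :
    p ∈ Module.support R M := by
  by_contra h
  have := Module.notMem_support_iff.mp h
  exact not_isAssociatedPrime_of_subsingleton
    (Module.associatedPrimes.mem_associatedPrimes_atPrime_of_mem_associatedPrimes hp)

lemma isWeaklyRegular_of_forall_localDepthGE [IsNoetherianRing R] [Module.Finite R M] (l : List R)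
    (h : ∀ i < l.length, ∀ p ∈ Module.support R M, (∀ x ∈ l.take (i + 1), x ∈ p.asIdeal) →
      LocalDepthGE p M (i + 1)) : IsWeaklyRegular M l := by
  induction l generalizing M with
  | nil => exact .nil R M
  | cons a l ih =>
    have ha : IsSMulRegular M a := by
      by_contra hna
      obtain ⟨p, hp, hap⟩ := Set.mem_iUnion₂.mp
        ((biUnion_associatedPrimes_eq_compl_regular R M).ge hna)
      let P : PrimeSpectrum R := ⟨p, hp.isPrime⟩
      exact (h 0 (by simp) P (mem_support_of_mem_associatedPrimes hp)
        (by simpa using hap)).notMem_associatedPrimes hp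
    refine .cons ha (ih fun i hi p hp hl ↦ ?_)
    rw [Module.support_quotSMulTop] at hp
    have hap : a ∈ p.asIdeal := hp.2 rfl
    exact (h (i + 1) (by simpa using hi) p hp.1 (by simpa [hap] using hl)).quotSMulTop ha

end LocalDepth

section Serre

variable {R : Type*} [CommRing R] [IsNoetherianRing R] {N : Type*} [AddCommGroup N] [Module R N]
  {n k : ℕ}

namespace serreCond

variable [Module.Finite R N]

lemma localDepthGE (h : serreCond R N n) {p : PrimeSpectrum R} (hp : p ∈ Module.support R N)
    (hkn : k ≤ n) (hk : k ≤ p.asIdeal.height) : LocalDepthGE p N k := by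
  obtain ⟨l, hlp, hlen, hl⟩ := h p.asIdeal p.isPrime (Module.annihilator_le_of_mem_support hp)
  have : Nontrivial (LocalizedModule.AtPrime p.asIdeal N) := hp
  have hmem : ∀ x ∈ l.map (algebraMap R (Localization.AtPrime p.asIdeal)),
      x ∈ IsLocalRing.maximalIdeal (Localization.AtPrime p.asIdeal) := by
    exact List.forall_mem_map.mpr fun x hx ↦
      (IsLocalization.AtPrime.to_map_mem_maximal_iff _ p.asIdeal x).mpr (hlp x hx)
  have hkl : k ≤ l.length := by
    rw [← Nat.cast_le (α := ℕ∞), hlen, ← PrimeSpectrum.height_eq_orderHeight]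
    exact le_min (Nat.cast_le.mpr hkn) hk
  exact (GradeGE.of_isWeaklyRegular hl hmem).mono (by simpa using hkl)

lemma height_eq_zero_of_mem_associatedPrimes (h : serreCond R N n) (hn : 0 < n) {q : Ideal R}
    (hq : q ∈ associatedPrimes R N) : q.height = 0 := by
  let Q : PrimeSpectrum R := ⟨q, hq.isPrime⟩
  by_contra hne
  exact (h.localDepthGE (p := Q) (mem_support_of_mem_associatedPrimes hq) hn
    (by simpa using Order.one_le_iff_ne_zero.mpr hne)).notMem_associatedPrimes hq

lemma isWeaklyRegular (h : serreCond R N n) {l : List R} (hlen : l.length ≤ n)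
    (hl : IsHeightSequence l) : IsWeaklyRegular N l := by
  refine isWeaklyRegular_of_forall_localDepthGE l fun i hi p hp hlp ↦ ?_
  have hle : Ideal.ofList (l.take (i + 1)) ≤ p.asIdeal := Ideal.span_le.mpr hlp
  exact h.localDepthGE hp (by omega) ((hl (i + 1) hi).trans (Ideal.height_mono hle))

end serreCond

lemma serreCond_of_forall_isWeaklyRegular (hR : ∀ q ∈ associatedPrimes R R, q.height = 0)
    (h : ∀ l : List R, l.length = n → (∀ x ∈ l, x ∈ nonZeroDivisors R) → IsHeightSequence l →
      IsWeaklyRegular N l) : serreCond R N n := by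
  intro p hp _
  obtain ⟨m, hm⟩ : ∃ m : ℕ, (m : ℕ∞) = min (n : ℕ∞) p.height :=
    ENat.ne_top_iff_exists.mp (ne_top_of_le_ne_top (ENat.natCast_ne_top n) (min_le_left _ _))
  have hmn : m ≤ n := Nat.cast_le.mp (hm.trans_le (min_le_left _ _))
  obtain ⟨l, rfl, hlp, hlR, hl⟩ :=
    exists_isHeightSequence_of_le_height hR m (hm.trans_le (min_le_right _ _))
  have hreg : IsWeaklyRegular N (l ++ List.replicate (n - l.length) 1) :=
    h _ (by simp [hmn]) (by simpa [or_imp, forall_and] using hlR) (hl.append_replicate_one _)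
  refine ⟨l, hlp, by rw [hm, ← PrimeSpectrum.height_eq_orderHeight], ?_⟩
  exact ((isWeaklyRegular_append_iff N _ _).mp hreg).1.of_isLocalizedModule
    (Localization p.primeCompl) p.primeCompl (LocalizedModule.mkLinearMap p.primeCompl N)

end Serre

/-- over a Noetherian ring `R` satisfying `(S₁)`, a nonzero
finitely generated module `N` satisfies `(Sₙ)` iff every sequence
`a₁, …, aₙ` of non-zerodivisors of `R` with `ht (a₁, …, aᵢ) ≥ i` for all
`1 ≤ i ≤ n` is `N`-regular (in the weak sense, not requiring
`N/(a₁,…,aₙ)N ≠ 0`). -/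
theorem stmt8 {R : Type*} [CommRing R] [IsNoetherianRing R]
    (hS1 : serreCond R R 1)
    {N : Type*} [AddCommGroup N] [Module R N] [Module.Finite R N] [Nontrivial N]
    (n : ℕ) (hn : 0 < n) :
    serreCond R N n ↔
      ∀ l : List R, l.length = n → (∀ x ∈ l, x ∈ nonZeroDivisors R) →
        (∀ i : ℕ, 1 ≤ i → i ≤ n → (i : ℕ∞) ≤ idealHt (Ideal.ofList (l.take i))) →
        IsWeaklyRegular N l := by
  have hR : ∀ q ∈ associatedPrimes R R, q.height = 0 := fun _ hq ↦
    hS1.height_eq_zero_of_mem_associatedPrimes one_pos hq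
  simp only [idealHt_eq_height]
  constructor
  · intro hN l hlen _ hht
    refine hN.isWeaklyRegular hlen.le fun i hi ↦ ?_
    obtain rfl | hpos := i.eq_zero_or_pos
    · simp
    · exact hht i hpos (hlen ▸ hi)
  · intro H
    exact serreCond_of_forall_isWeaklyRegular hR fun l hlen hlR hl ↦
      H l hlen hlR fun i _ hi ↦ hl i (hlen ▸ hi)
end

section
/- Let $R$ be a Noetherian ring which is locally quasi-unmixed and satisfies $(S_1)$, and let $M$ be a finitely generated torsion-free $R$-module. Then $\dim_{R_\mathfrak{p}}M_\mathfrak{p}=\dim R_\mathfrak{p}$ for every $\mathfrak{p}\in\mathrm{Supp}_R M$. -/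
/-- A Noetherian local ring is quasi-unmixed if all minimal primes of its
`𝔪`-adic completion have the same codimension, i.e. `dim Â/q = dim Â` for every
minimal prime `q` of `Â`. -/
def QuasiUnmixed (A : Type*) [CommRing A] [IsLocalRing A] : Prop :=
  ∀ q ∈ minimalPrimes (AdicCompletion (IsLocalRing.maximalIdeal A) A),
    ringKrullDim (AdicCompletion (IsLocalRing.maximalIdeal A) A ⧸ q) =
      ringKrullDim (AdicCompletion (IsLocalRing.maximalIdeal A) A)

/-- A ring is locally quasi-unmixed if all its localizations at primes are
quasi-unmixed. -/
def LocallyQuasiUnmixed (R : Type*) [CommRing R] : Prop :=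
  ∀ (p : Ideal R) [p.IsPrime], QuasiUnmixed (Localization.AtPrime p)

/-! For a Noetherian local ring `A`, the completion `A → Â` is faithfully flat and the maximal ideal
of `Â` is extended from `A`. Hence each minimal prime `q` of `A` lies under a minimal prime `Q` of
`Â`, and `dim A ≤ dim Â = dim Â/Q ≤ dim A/q` when `A` is quasi-unmixed, so `A` is equidimensional.
Torsion-freeness puts every associated prime of `M` inside an associated prime of `R`, so `(S₁)`
makes the associated primes of `M`, and then those of `M_p`, minimal; one of them contains
`ann M_p` and has a quotient of full dimension.

`Â` is Noetherian because it is a quotient of a power series ring over `A` whose finitely many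
variables map to generators of `𝔪`. -/

/-- A ring is equidimensional if all its irreducible components have the same dimension as the ring
itself; quasi-unmixedness of a local ring is equidimensionality of its completion. -/
def IsEquidimensional (A : Type*) [CommRing A] : Prop :=
  ∀ q ∈ minimalPrimes A, ringKrullDim (A ⧸ q) = ringKrullDim A

section AssociatedPrimes

open Module.associatedPrimes

variable {R M : Type*} [CommRing R] [IsNoetherianRing R] [AddCommGroup M] [Module R M]

theorem exists_mem_associatedPrimes_ge_of_isTorsionFree [Module.IsTorsionFree R M] {q : Ideal R}
    (hq : q ∈ associatedPrimes R M) : ∃ P ∈ associatedPrimes R R, q ≤ P := by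
  obtain ⟨hprime, x, hx⟩ := isAssociatedPrime_iff.mp hq
  have not_mem_nonZeroDivisors : (q : Set R) ⊆ (nonZeroDivisors R : Set R)ᶜ := by
    intro r hr hr'
    have hrx : r • x = 0 := by rwa [hx, SetLike.mem_coe, Submodule.mem_colon_singleton] at hr
    have hx0 : x = 0 :=
      (isRegular_iff_mem_nonZeroDivisors.mpr hr').isSMulRegular.right_eq_zero_of_smul hrx
    exact hprime.ne_top (by simp [hx, hx0])
  rw [← biUnion_associatedPrimes_eq_compl_nonZeroDivisors] at not_mem_nonZeroDivisors
  exact (q.subset_union_prime_finite (associatedPrimes.finite R R) (f := id) 0 0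
    fun _ hP _ _ ↦ hP.isPrime).1 not_mem_nonZeroDivisors

theorem associatedPrimes_subset_minimalPrimes_of_isTorsionFree [Module.IsTorsionFree R M]
    (hR : associatedPrimes R R ⊆ minimalPrimes R) : associatedPrimes R M ⊆ minimalPrimes R := by
  intro q hq
  obtain ⟨P, hP, hqP⟩ := exists_mem_associatedPrimes_ge_of_isTorsionFree hq
  have hPq : P ≤ q := (hR hP).2 ⟨hq.isPrime, bot_le⟩ hqP
  exact le_antisymm hqP hPq ▸ hR hP

theorem associatedPrimes_subset_minimalPrimes_of_isLocalizedModule (S : Submonoid R)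
    (R' : Type*) [CommRing R'] [Algebra R R'] [IsLocalization S R']
    {M' : Type*} [AddCommGroup M'] [Module R M'] [Module R' M'] [IsScalarTower R R' M']
    (f : M →ₗ[R] M') [IsLocalizedModule S f] (hM : associatedPrimes R M ⊆ minimalPrimes R) :
    associatedPrimes R' M' ⊆ minimalPrimes R' := by
  have minimalPrimes_eq : minimalPrimes R' = Ideal.under R ⁻¹' minimalPrimes R := by
    simpa only [Ideal.map_bot] using IsLocalization.minimalPrimes_map S R' (⊥ : Ideal R)
  rw [minimalPrimes_eq,
    ← preimage_comap_associatedPrimes_eq_associatedPrimes_of_isLocalizedModule S R' f]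
  exact Set.preimage_mono hM

theorem IsEquidimensional.ringKrullDim_quotient_annihilator [Nontrivial M]
    (hR : IsEquidimensional R) (hM : associatedPrimes R M ⊆ minimalPrimes R) :
    ringKrullDim (R ⧸ Module.annihilator R M) = ringKrullDim R := by
  obtain ⟨q, hq⟩ := associatedPrimes.nonempty R M
  have hann : Module.annihilator R M ≤ q :=
    Submodule.annihilator_top.symm.trans_le (IsAssociatedPrime.annihilator_le hq)
  refine le_antisymm (ringKrullDim_quotient_le _) ?_
  calc ringKrullDim R = ringKrullDim (R ⧸ q) := (hR q (hM hq)).symm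
    _ ≤ ringKrullDim (R ⧸ Module.annihilator R M) :=
      ringKrullDim_le_of_surjective _ (Ideal.Quotient.factor_surjective hann)

end AssociatedPrimes

section AdicCompletion

theorem hasEval_of_isAdic {σ B : Type*} [Finite σ] [CommRing B] [TopologicalSpace B]
    {J : Ideal B} (hJ : IsAdic J) {b : σ → B} (hb : ∀ i, b i ∈ J) : MvPowerSeries.HasEval b where
  hpow i := by
    refine hJ.hasBasis_nhds_zero.tendsto_right_iff.mpr fun n _ ↦ ?_
    filter_upwards [Filter.eventually_ge_atTop n] with k hk
    exact Ideal.pow_le_pow_right hk (Ideal.pow_mem_pow (hb i) k)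
  tendsto_zero := by simp only [Filter.cofinite_eq_bot, Filter.tendsto_bot]

theorem exists_mvPowerSeries_algHom_X_eq {σ A B : Type*} [Finite σ] [CommRing A] [CommRing B]
    [Algebra A B] {J : Ideal B} [IsAdicComplete J B] {b : σ → B} (hb : ∀ i, b i ∈ J) :
    ∃ F : MvPowerSeries σ A →ₐ[A] B, ∀ i, F (MvPowerSeries.X i) = b i := by
  let : UniformSpace A := ⊥
  let : WithIdeal B := ⟨J⟩
  have hJ : IsAdic J := rfl
  obtain ⟨_, _⟩ : CompleteSpace B ∧ T2Space B := hJ.isAdicComplete_iff.mp ‹_›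
  have : ContinuousSMul A B := continuousSMul_of_algebraMap A B continuous_of_discreteTopology
  refine ⟨MvPowerSeries.aeval (hasEval_of_isAdic hJ hb), fun i ↦ ?_⟩
  rw [← MvPolynomial.coe_X, MvPowerSeries.aeval_coe, MvPolynomial.aeval_X]

theorem isNoetherianRing_of_isAdicComplete {A B : Type*} [CommRing A] [IsNoetherianRing A]
    [CommRing B] [Algebra A B] {J : Ideal B} [IsAdicComplete J B] (hJ : J.FG)
    (hAB : Function.Surjective (algebraMap A (B ⧸ J))) : IsNoetherianRing B := by
  obtain ⟨s, hs⟩ := hJ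
  obtain ⟨F, hF⟩ := exists_mvPowerSeries_algHom_X_eq (A := A) (J := J) (b := ((↑) : s → B))
    fun i ↦ hs ▸ Ideal.subset_span i.2
  let X : Ideal (MvPowerSeries s A) := Ideal.span (Set.range MvPowerSeries.X)
  have map_X : X.map (F : MvPowerSeries s A →+* B) = J := by
    have F_comp_X : F ∘ MvPowerSeries.X = ((↑) : s → B) := funext hF
    rw [Ideal.map_span, ← Set.range_comp, RingHom.coe_coe, F_comp_X, Subtype.range_coe, ← hs]
  have : IsHausdorff (X.map (F : MvPowerSeries s A →+* B)) B := map_X ▸ inferInstance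
  refine isNoetherianRing_of_surjective _ _ _
    (surjective_of_mk_map_comp_surjective (I := X) (F : MvPowerSeries s A →+* B) ?_)
  rw [map_X]
  intro y
  obtain ⟨a, rfl⟩ := hAB y
  exact ⟨algebraMap A _ a, congrArg (Ideal.Quotient.mk J) (F.commutes a)⟩

theorem isNoetherianRing_adicCompletion {A : Type*} [CommRing A] [IsNoetherianRing A]
    (I : Ideal A) : IsNoetherianRing (AdicCompletion I A) := by
  have hI : I.FG := I.fg_of_isNoetherianRing
  have := AdicCompletion.isAdicComplete_self I hI
  refine isNoetherianRing_of_isAdicComplete (A := A)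
    (hI.map (algebraMap A (AdicCompletion I A))) fun y ↦ ?_
  obtain ⟨x, rfl⟩ := Ideal.Quotient.mk_surjective y
  obtain ⟨a, ha⟩ := Ideal.Quotient.mk_surjective (AdicCompletion.evalOneₐ I x)
  refine ⟨a, Ideal.Quotient.eq.mpr ?_⟩
  rw [← AdicCompletion.ker_evalOneₐ_eq_map I hI]
  exact (map_sub _ _ _).trans (sub_eq_zero.mpr ha)

end AdicCompletion

section LocalRing

open IsLocalRing

variable {A B : Type*} [CommRing A] [CommRing B] [IsLocalRing A] [IsLocalRing B]
  [IsNoetherianRing A] [IsNoetherianRing B] [Algebra A B]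

theorem ringKrullDim_le_of_map_maximalIdeal_eq
    (h : (maximalIdeal A).map (algebraMap A B) = maximalIdeal B) :
    ringKrullDim B ≤ ringKrullDim A := by
  have : IsLocalHom (algebraMap A B) := ((local_hom_TFAE _).out 0 2).mpr h.le
  have height_le : (maximalIdeal B).height ≤ (maximalIdeal A).height := by
    have fiber_height : ((maximalIdeal B).map
        (Ideal.Quotient.mk ((maximalIdeal A).map (algebraMap A B)))).height = 0 := by
      rw [h, Ideal.map_quotient_self, Ideal.height_bot]
    simpa only [fiber_height, add_zero] using
      Ideal.height_le_height_add_of_liesOver (maximalIdeal A) (maximalIdeal B)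
  simpa only [← maximalIdeal_height_eq_ringKrullDim] using WithBot.coe_le_coe.mpr height_le

theorem ringKrullDim_le_of_flat [Module.Flat A B] [IsLocalHom (algebraMap A B)] :
    ringKrullDim A ≤ ringKrullDim B := by
  rw [← maximalIdeal_height_eq_ringKrullDim, ← maximalIdeal_height_eq_ringKrullDim,
    Ideal.height_eq_height_add_of_liesOver_of_hasGoingDown (maximalIdeal A) (maximalIdeal B)]
  exact WithBot.coe_le_coe.mpr le_self_add

theorem ringKrullDim_quotient_le_of_map_maximalIdeal_eq
    (h : (maximalIdeal A).map (algebraMap A B) = maximalIdeal B)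
    (q : Ideal A) (Q : Ideal B) [Q.LiesOver q] :
    ringKrullDim (B ⧸ Q) ≤ ringKrullDim (A ⧸ q) := by
  cases subsingleton_or_nontrivial (B ⧸ Q) with
  | inl _ => simp only [ringKrullDim_eq_bot_of_subsingleton, bot_le]
  | inr _ =>
    have : Nontrivial (A ⧸ q) := (algebraMap (A ⧸ q) (B ⧸ Q)).domain_nontrivial
    have : IsLocalRing (A ⧸ q) := .of_surjective' _ Ideal.Quotient.mk_surjective
    have : IsLocalRing (B ⧸ Q) := .of_surjective' _ Ideal.Quotient.mk_surjective
    refine ringKrullDim_le_of_map_maximalIdeal_eq ?_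
    rw [← map_maximalIdeal_of_surjective _ (Ideal.Quotient.mk_surjective (I := q)),
      ← map_maximalIdeal_of_surjective _ (Ideal.Quotient.mk_surjective (I := Q)),
      ← h, Ideal.map_map, Ideal.map_map]
    rfl

theorem IsEquidimensional.of_flat_of_map_maximalIdeal_eq [Module.Flat A B]
    (h : (maximalIdeal A).map (algebraMap A B) = maximalIdeal B) (hB : IsEquidimensional B) :
    IsEquidimensional A := by
  intro q hq
  have : IsLocalHom (algebraMap A B) := ((local_hom_TFAE _).out 0 2).mpr h.le
  have : Module.FaithfullyFlat A B := .of_flat_of_isLocalHom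
  obtain ⟨Q, hQ, hQq⟩ : ∃ Q ∈ minimalPrimes B, Q.comap (algebraMap A B) = q := by
    refine Ideal.exists_minimalPrimes_comap_eq (algebraMap A B) q ?_
    rwa [← RingHom.ker, (RingHom.injective_iff_ker_eq_bot _).mp
      (FaithfulSMul.algebraMap_injective A B)]
  have : Q.LiesOver q := ⟨hQq.symm⟩
  refine le_antisymm (ringKrullDim_quotient_le q) ?_
  calc ringKrullDim A ≤ ringKrullDim B := ringKrullDim_le_of_flat
    _ = ringKrullDim (B ⧸ Q) := (hB Q hQ).symm
    _ ≤ ringKrullDim (A ⧸ q) := ringKrullDim_quotient_le_of_map_maximalIdeal_eq h q Q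

theorem QuasiUnmixed.isEquidimensional (hA : QuasiUnmixed A) : IsEquidimensional A :=
  have := isNoetherianRing_adicCompletion (maximalIdeal A)
  .of_flat_of_map_maximalIdeal_eq AdicCompletion.maximalIdeal_eq_map.symm hA

end LocalRing

theorem stmt10_general {R : Type*} [CommRing R] [IsNoetherianRing R]
    (hS1 : associatedPrimes R R ⊆ minimalPrimes R)
    {M : Type*} [AddCommGroup M] [Module R M] [Module.IsTorsionFree R M]
    (p : PrimeSpectrum R) (hqu : QuasiUnmixed (Localization.AtPrime p.asIdeal))
    (hp : p ∈ Module.support R M) :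
    ringKrullDim (Localization.AtPrime p.asIdeal ⧸ Module.annihilator
        (Localization.AtPrime p.asIdeal) (LocalizedModule p.asIdeal.primeCompl M)) =
      ringKrullDim (Localization.AtPrime p.asIdeal) := by
  have : Nontrivial (LocalizedModule p.asIdeal.primeCompl M) := Module.mem_support_iff.mp hp
  refine hqu.isEquidimensional.ringKrullDim_quotient_annihilator ?_
  exact associatedPrimes_subset_minimalPrimes_of_isLocalizedModule p.asIdeal.primeCompl _
    (LocalizedModule.mkLinearMap p.asIdeal.primeCompl M)
    (associatedPrimes_subset_minimalPrimes_of_isTorsionFree hS1)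

/-- if `R` is a locally quasi-unmixed Noetherian ring satisfying
`(S₁)` (i.e. `Ass R = Min R`) and `M` is a finitely generated torsion-free
`R`-module, then `dim_{R_p} M_p = dim R_p` for every prime `p` in the support
of `M`, where `dim_{R_p} M_p = dim (R_p / ann M_p)`. -/
theorem stmt10 {R : Type*} [CommRing R] [IsNoetherianRing R]
    (hqu : LocallyQuasiUnmixed R)
    (hS1 : associatedPrimes R R = minimalPrimes R)
    {M : Type*} [AddCommGroup M] [Module R M] [Module.Finite R M]
    (htf : ∀ r ∈ nonZeroDivisors R, Function.Injective fun x : M => r • x) :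
    ∀ (p : Ideal R) [p.IsPrime], Module.annihilator R M ≤ p →
      ringKrullDim (Localization.AtPrime p ⧸
          Module.annihilator (Localization.AtPrime p) (LocalizedModule p.primeCompl M)) =
        ringKrullDim (Localization.AtPrime p) := by
  intro p _ hp
  have : Module.IsTorsionFree R M := ⟨fun r hr ↦ htf r hr.mem_nonZeroDivisors⟩
  exact stmt10_general hS1.subset ⟨p, inferInstance⟩ (hqu p)
    (by rwa [Module.support_eq_zeroLocus])
end
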